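/- (Lemma 3.3, made precise.) Fix I ∈ ℝᵈ, φ ∈ 𝕋ᵈ and t ∈ 𝕋. Assume that the map τ ↦ 𝓜̃(τ, I, φ, t) is differentiable on ℝⁿ, that each map ς ↦ 𝓜̃ᵢ(ς, I, φ, t) is differentiable, and that for every i ∈ {1,…,n} the continuous function (θ, u) ↦ 𝓜̃ᵢ(0, I, θ, u) on 𝕋ᵈ × 𝕋 is not constant on the closure of the orbit { (φ − ςω(I), t − ς) : ς ∈ ℝ } ⊆ 𝕋ᵈ × 𝕋. Then the Melnikov potential has a critical point with respect to τ: there exists τ* ∈ ℝⁿ with ∇_τ 𝓜̃(τ*, I, φ, t) = 0; in fact there exist infinitely many such critical points. -/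

import Mathlib

/-!
Write `g i ς` for the `i`-th partial Melnikov potential at `(ς, I, φ, t)`.

If the times `τ i` are far apart, then at every moment all pendula but one are close to their
equilibrium, so the Melnikov potential is close to `∑ i, g i (τ i)`. On the other hand `g i ς` is a
continuous function of the point `(φ - ς ω(I), t - ς)`, which moves along a one-parameter subgroup
of a compact group; hence the `g i` have arbitrarily large common `ε`-almost periods. Since `g i` is
not constant, it takes on some interval `[a i, b i]` an intermediate value exceeding both endpoint
values, and does so with almost the same margin on all translates of the interval by almost
periods. Translating the intervals by almost periods `T i` that are far apart and far to the right,
the maximum of the Melnikov potential over the box `∏ i, [a i + T i, b i + T i]` cannot lie on the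
boundary.
-/

open MeasureTheory

/-- The Melnikov potential. -/
noncomputable def melnikovPotential {n d : ℕ}
    (p0 : Fin n → ℝ → ℝ) (q0 : Fin n → ℝ → AddCircle (1:ℝ))
    (h : (Fin n → ℝ) → (Fin n → AddCircle (1:ℝ)) → (Fin d → ℝ) →
      (Fin d → AddCircle (1:ℝ)) → ℝ → ℝ)
    (ω : (Fin d → ℝ) → Fin d → ℝ)
    (τ : Fin n → ℝ) (I : Fin d → ℝ) (φ : Fin d → AddCircle (1:ℝ)) (t : ℝ) : ℝ :=
  -∫ σ : ℝ,
    (h (fun i => p0 i (τ i + σ)) (fun i => q0 i (τ i + σ)) I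
        (fun j => φ j + ((σ * ω I j : ℝ) : AddCircle (1:ℝ))) (t + σ)
      - h 0 0 I (fun j => φ j + ((σ * ω I j : ℝ) : AddCircle (1:ℝ))) (t + σ))

/-- The `i`-th partial Melnikov potential. -/
noncomputable def partialMelnikov {n d : ℕ} (i : Fin n)
    (p0 : Fin n → ℝ → ℝ) (q0 : Fin n → ℝ → AddCircle (1:ℝ))
    (h : (Fin n → ℝ) → (Fin n → AddCircle (1:ℝ)) → (Fin d → ℝ) →
      (Fin d → AddCircle (1:ℝ)) → ℝ → ℝ)
    (ω : (Fin d → ℝ) → Fin d → ℝ)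
    (ς : ℝ) (I : Fin d → ℝ) (φ : Fin d → AddCircle (1:ℝ)) (t : ℝ) : ℝ :=
  -∫ σ : ℝ,
    (h (Pi.single i (p0 i (ς + σ))) (Pi.single i (q0 i (ς + σ))) I
        (fun j => φ j + ((σ * ω I j : ℝ) : AddCircle (1:ℝ))) (t + σ)
      - h 0 0 I (fun j => φ j + ((σ * ω I j : ℝ) : AddCircle (1:ℝ))) (t + σ))

section SeparatedSums

open Filter Function Set Topology

variable {ι : Type*}

theorem update_mem_Icc {α : Type*} [DecidableEq ι] [Preorder α] {a b f : ι → α} {i : ι} {x : α}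
    (hf : f ∈ Icc a b) (hx : x ∈ Icc (a i) (b i)) : update f i x ∈ Icc a b :=
  ⟨le_update_iff.2 ⟨hx.1, fun j _ => hf.1 j⟩, update_le_iff.2 ⟨hx.2, fun j _ => hf.2 j⟩⟩

theorem exists_mem_Icc_isLocalMax_of_lt_update {α β : Type*} [DecidableEq ι] [Finite ι]
    [LinearOrder α] [TopologicalSpace α] [OrderTopology α] [CompactIccSpace α] [LinearOrder β]
    [TopologicalSpace β] [ClosedIciTopology β] {f : (ι → α) → β} {a b m : ι → α}
    (hf : ContinuousOn f (Icc a b)) (hm : m ∈ Icc a b)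
    (hface : ∀ τ ∈ Icc a b, ∀ i, τ i = a i ∨ τ i = b i → f τ < f (update τ i (m i))) :
    ∃ τ ∈ Icc a b, IsLocalMax f τ := by
  obtain ⟨τ, hτ, hmax⟩ := isCompact_Icc.exists_isMaxOn ⟨m, hm⟩ hf
  have hinterior : ∀ i, ¬(τ i = a i ∨ τ i = b i) := fun i hi =>
    (hface τ hτ i hi).not_ge <| hmax <| update_mem_Icc hτ ⟨hm.1 i, hm.2 i⟩
  refine ⟨τ, hτ, hmax.isLocalMax ?_⟩
  rw [← pi_univ_Icc]
  exact set_pi_mem_nhds finite_univ fun i _ => Icc_mem_nhds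
    ((hτ.1 i).lt_of_ne fun h => hinterior i (.inl h.symm))
    ((hτ.2 i).lt_of_ne fun h => hinterior i (.inr h))

theorem sum_update_add {M : Type*} [AddCommMonoid M] {α : ι → Type*} [DecidableEq ι] [Fintype ι]
    (g : ∀ i, α i → M) (τ : ∀ i, α i) (i : ι) (x : α i) :
    ∑ j, g j (update τ i x j) + g i (τ i) = ∑ j, g j (τ j) + g i x := by
  simp_rw [apply_update g, Finset.sum_update_of_mem (Finset.mem_univ i),
    Finset.sum_eq_add_sum_sdiff_singleton_of_mem (Finset.mem_univ i) fun j => g j (τ j)]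
  abel

theorem exists_mem_Icc_isLocalMax_of_abs_sub_sum_le [Fintype ι] {f : (ι → ℝ) → ℝ}
    {g : ι → ℝ → ℝ} {a b m : ι → ℝ} {δ : ℝ} (hf : ContinuousOn f (Icc a b)) (hm : m ∈ Icc a b)
    (hfg : ∀ τ ∈ Icc a b, |f τ - ∑ i, g i (τ i)| ≤ δ)
    (ha : ∀ i, g i (a i) + 2 * δ < g i (m i)) (hb : ∀ i, g i (b i) + 2 * δ < g i (m i)) :
    ∃ τ ∈ Icc a b, IsLocalMax f τ := by
  classical
  refine exists_mem_Icc_isLocalMax_of_lt_update hf hm fun τ hτ i hi => ?_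
  have hgain : g i (τ i) + 2 * δ < g i (m i) := by
    rcases hi with hi | hi
    · exact hi ▸ ha i
    · exact hi ▸ hb i
  have hsum := sum_update_add g τ i (m i)
  have hbefore := (abs_le.1 (hfg τ hτ)).2
  have hafter := (abs_le.1 (hfg _ (update_mem_Icc hτ ⟨hm.1 i, hm.2 i⟩))).1
  linarith

/-- The function `f` of several times approaches the sum of the functions `g i` of one time each as
the mutual distances of the times grow. -/
def IsAsymptoticSum [Fintype ι] (f : (ι → ℝ) → ℝ) (g : ι → ℝ → ℝ) : Prop :=
  ∀ ε > 0, ∃ L, ∀ τ : ι → ℝ, (Pairwise fun i j => L ≤ |τ i - τ j|) → |f τ - ∑ i, g i (τ i)| ≤ ε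

theorem exists_pairwise_le_abs_sub_of_frequently_atTop [Countable ι] {P : ℝ → Prop}
    (hP : ∃ᶠ T in atTop, P T) (L : ℝ) :
    ∃ T : ι → ℝ, (∀ i, P (T i)) ∧ Pairwise fun i j => L ≤ |T i - T j| := by
  have : Std.Symm fun x y : ℝ => L ≤ |x - y| := ⟨fun x y h => by rwa [abs_sub_comm]⟩
  obtain ⟨u, hu, hsep⟩ := exists_seq_of_forall_finset_exists' P (fun x y => L ≤ |x - y|)
    fun s _ => by
      have hfar : ∀ᶠ T in atTop, ∀ x ∈ s, L ≤ |x - T| := by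
        refine (eventually_all_finset s).2 fun x _ => ?_
        filter_upwards [eventually_ge_atTop (x + L)] with T hT
        rw [abs_sub_comm]
        exact (le_sub_iff_add_le'.2 hT).trans (le_abs_self _)
      exact (hP.and_eventually hfar).exists
  obtain ⟨e, he⟩ := exists_injective_nat ι
  exact ⟨u ∘ e, fun i => hu (e i), fun i j hij => hsep (he.ne hij)⟩

/-- For every `ε > 0` the function `g` has arbitrarily large `ε`-almost periods. Unlike in Bohr's
definition of almost periodicity, these need not be relatively dense. -/
def HasLargeAlmostPeriods {X : Type*} [PseudoMetricSpace X] (g : ℝ → X) : Prop :=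
  ∀ ε > 0, ∃ᶠ T in atTop, ∀ s, dist (g (s + T)) (g s) < ε

namespace HasLargeAlmostPeriods

theorem eval [Fintype ι] {X : ι → Type*} [∀ i, PseudoMetricSpace (X i)] {g : ℝ → ∀ i, X i}
    (hg : HasLargeAlmostPeriods g) (i : ι) : HasLargeAlmostPeriods fun s => g s i := fun ε hε =>
  (hg ε hε).mono fun _ hT s => (dist_le_pi_dist _ _ i).trans_lt (hT s)

theorem exists_lt_of_lt {g : ℝ → ℝ} (hg : HasLargeAlmostPeriods g) {x y : ℝ} (hxy : g x < g y) :
    ∃ a m b, m ∈ Icc a b ∧ g a < g m ∧ g b < g m := by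
  obtain ⟨T, hT, hxT, hyT⟩ :=
    ((hg (g y - g x) (sub_pos.2 hxy)).and_eventually
      ((eventually_ge_atTop (x - y)).and (eventually_ge_atTop (y - x)))).exists
  have hleft := hT (x - T)
  have hright := hT x
  rw [sub_add_cancel, Real.dist_eq, abs_sub_lt_iff] at hleft
  rw [Real.dist_eq, abs_sub_lt_iff] at hright
  exact ⟨x - T, y, x + T, ⟨by linarith, by linarith⟩, by linarith, by linarith⟩

end HasLargeAlmostPeriods

theorem eventually_forall_dist_add_lt {G X : Type*} [AddCommGroup G] [UniformSpace G]
    [IsUniformAddGroup G] [PseudoMetricSpace X] {F : G → X} (hF : UniformContinuous F) {ε : ℝ}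
    (hε : 0 < ε) : ∀ᶠ v in 𝓝 (0 : G), ∀ x, dist (F (x + v)) (F x) < ε := by
  have hclose := hF (Metric.dist_mem_uniformity hε)
  rw [uniformity_eq_comap_nhds_zero G, mem_map, mem_comap] at hclose
  obtain ⟨V, hV, hVF⟩ := hclose
  filter_upwards [hV] with v hv x
  rw [dist_comm]
  exact hVF (show (x, x + v).2 - (x, x + v).1 ∈ V by simpa using hv)

-- The multiples of an element of a compact group accumulate at `0`.
theorem hasLargeAlmostPeriods_comp_add {G X : Type*} [AddCommGroup G] [UniformSpace G]
    [IsUniformAddGroup G] [CompactSpace G] [PseudoMetricSpace X] {F : G → X} (hF : Continuous F)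
    (x : G) (γ : ℝ →+ G) : HasLargeAlmostPeriods fun s => F (x + γ s) := fun ε hε => by
  have hreturn : ∃ᶠ N : ℕ in atTop, ∀ y, dist (F (y + N • γ 1)) (F y) < ε :=
    (mapClusterPt_zero_atTop_nsmul (γ 1)).frequently <|
      eventually_forall_dist_add_lt (CompactSpace.uniformContinuous_of_continuous hF) hε
  refine tendsto_natCast_atTop_atTop.frequently (hreturn.mono fun N hN s => ?_)
  have hadd : x + γ (s + N) = x + γ s + N • γ 1 := by
    rw [map_add, ← add_assoc, ← nsmul_one N, map_nsmul]
  simpa only [hadd] using hN (x + γ s)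

theorem exists_pos_forall_add_lt [Finite ι] {x y : ι → ℝ} (hxy : ∀ i, x i < y i) :
    ∃ δ > 0, ∀ i, x i + δ < y i := by
  have hsmall : ∀ᶠ δ in 𝓝[>] (0 : ℝ), ∀ i, x i + δ < y i := eventually_all.2 fun i => by
    filter_upwards [Ioo_mem_nhdsGT (sub_pos.2 (hxy i))] with δ hδ
    exact lt_sub_iff_add_lt'.1 hδ.2
  exact (eventually_mem_nhdsWithin.and hsmall).exists

theorem le_abs_sub_of_mem_Icc_add {a b a' b' B L x x' T T' : ℝ} (hx : x ∈ Icc (a + T) (b + T))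
    (hx' : x' ∈ Icc (a' + T') (b' + T')) (hB : -a ≤ B ∧ b ≤ B) (hB' : -a' ≤ B ∧ b' ≤ B)
    (hT : L + 2 * B ≤ |T - T'|) : L ≤ |x - x'| := by
  obtain ⟨_, _⟩ := hx
  obtain ⟨_, _⟩ := hx'
  rcases le_abs.1 hT with h | h
  · exact le_abs.2 (.inl (by linarith))
  · exact le_abs.2 (.inr (by linarith))

theorem IsAsymptoticSum.exists_lt_isLocalMax [Fintype ι] [Nonempty ι] {f : (ι → ℝ) → ℝ}
    {g : ι → ℝ → ℝ} (hfg : IsAsymptoticSum f g) (hf : Continuous f)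
    (hg : HasLargeAlmostPeriods fun s i => g i s) (hlt : ∀ i, ∃ x y, g i x < g i y) (r : ι → ℝ) :
    ∃ τ, r < τ ∧ IsLocalMax f τ := by
  choose x y hxy using hlt
  choose a m b hm hpeak using fun i => (hg.eval i).exists_lt_of_lt (hxy i)
  obtain ⟨δ, hδ, hmargin⟩ := exists_pos_forall_add_lt fun i => max_lt (hpeak i).1 (hpeak i).2
  obtain ⟨L, hL⟩ := hfg (δ / 4) (by positivity)
  obtain ⟨B, hB, hBr⟩ : ∃ B, (∀ i, -a i ≤ B ∧ b i ≤ B) ∧ ∀ i, r i < B :=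
    ((eventually_all.2 fun i => (eventually_ge_atTop _).and (eventually_ge_atTop _)).and
      (eventually_all.2 fun i => eventually_gt_atTop (r i))).exists
  obtain ⟨T, hT, hsep⟩ := exists_pairwise_le_abs_sub_of_frequently_atTop (ι := ι)
    ((hg (δ / 4) (by positivity)).and_eventually (eventually_ge_atTop (2 * B))) (L + 2 * B)
  have hperiod : ∀ i s, |g i (s + T i) - g i s| < δ / 4 := fun i s =>
    (dist_le_pi_dist _ _ i).trans_lt ((hT i).1 s)
  have hshift : ∀ i s, g i s + δ < g i (m i) → g i (s + T i) + 2 * (δ / 4) < g i (m i + T i) :=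
    fun i s hs => by
      linarith [(abs_lt.1 (hperiod i s)).2, (abs_lt.1 (hperiod i (m i))).1]
  obtain ⟨τ, hτ, hmax⟩ := exists_mem_Icc_isLocalMax_of_abs_sub_sum_le (f := f) (g := g)
    (a := a + T) (b := b + T) (m := m + T) hf.continuousOn
    ⟨fun i => add_le_add_left (hm i).1 _, fun i => add_le_add_left (hm i).2 _⟩
    (fun τ hτ => hL τ fun i j hij =>
      le_abs_sub_of_mem_Icc_add ⟨hτ.1 i, hτ.2 i⟩ ⟨hτ.1 j, hτ.2 j⟩ (hB i) (hB j) (hsep hij))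
    (fun i => hshift i (a i) (by linarith [hmargin i, le_max_left (g i (a i)) (g i (b i))]))
    (fun i => hshift i (b i) (by linarith [hmargin i, le_max_right (g i (a i)) (g i (b i))]))
  refine ⟨τ, lt_of_strongLT fun i => ?_, hmax⟩
  have hτi : a i + T i ≤ τ i := hτ.1 i
  linarith [(hB i).1, hBr i, (hT i).2]

end SeparatedSums

section Splitting

open Set Filter Topology

theorem exists_forall_ne_le_two_mul_abs {ι : Type*} [Finite ι] [Nonempty ι] {u : ι → ℝ} {L : ℝ}
    (hu : Pairwise fun i j => L ≤ |u i - u j|) : ∃ k, ∀ j ≠ k, L ≤ 2 * |u j| := by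
  obtain ⟨k, hk⟩ := Finite.exists_min fun i => |u i|
  exact ⟨k, fun j hj => by linarith [hu hj, abs_sub (u j) (u k), hk j]⟩

theorem tendsto_setIntegral_le_two_mul_abs {ρ : ℝ → ℝ} (hρ : Integrable ρ) :
    Tendsto (fun L => ∫ s in {s | L ≤ 2 * |s|}, ρ s) atTop (𝓝 0) := by
  have hempty : ⋂ L : ℝ, {s : ℝ | L ≤ 2 * |s|} = ∅ :=
    eq_empty_of_forall_notMem fun s hs => (lt_add_one (2 * |s|)).not_ge (mem_iInter.1 hs _)
  simpa only [hempty, setIntegral_empty] using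
    tendsto_setIntegral_of_antitone (f := ρ) (μ := volume) (s := fun L => {s | L ≤ 2 * |s|})
      (fun L => measurableSet_le measurable_const (by fun_prop))
      (fun L M hLM s hs => le_trans hLM hs) ⟨0, hρ.integrableOn⟩

variable {ι E F V : Type*} [Fintype ι] [PseudoMetricSpace E] [Zero E]
  [PseudoMetricSpace F] [Zero F] [NormedAddCommGroup V] {K : ℝ}

section
variable [DecidableEq ι]

theorem sum_dist_single_zero (i : ι) (x : E) :
    ∑ j, dist ((Pi.single i x : ι → E) j) 0 = dist x 0 := by
  rw [Fintype.sum_eq_single i fun j hj => by rw [Pi.single_eq_of_ne hj, dist_self],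
    Pi.single_eq_same]

theorem sum_dist_single (i : ι) (x : ι → E) :
    ∑ j, dist (x j) ((Pi.single i (x i) : ι → E) j) = ∑ j ∈ Finset.univ.erase i, dist (x j) 0 := by
  rw [← Finset.add_sum_erase _ _ (Finset.mem_univ i), Pi.single_eq_same, dist_self, zero_add]
  exact Finset.sum_congr rfl fun j hj => by rw [Pi.single_eq_of_ne (Finset.ne_of_mem_erase hj)]

theorem norm_sub_sum_single_le {H : (ι → E) → (ι → F) → V}
    (hH : ∀ p q p' q', ‖H p q - H p' q'‖ ≤
      K * (∑ i, dist (p i) (p' i) + ∑ i, dist (q i) (q' i)))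
    (p : ι → E) (q : ι → F) (k : ι) :
    ‖H p q - H 0 0 - ∑ i, (H (Pi.single i (p i)) (Pi.single i (q i)) - H 0 0)‖ ≤
      2 * K * ∑ j ∈ Finset.univ.erase k, (dist (p j) 0 + dist (q j) 0) := by
  have hk : ‖H p q - H (Pi.single k (p k)) (Pi.single k (q k))‖ ≤
      K * ∑ j ∈ Finset.univ.erase k, (dist (p j) 0 + dist (q j) 0) := by
    simpa only [sum_dist_single, Finset.sum_add_distrib] using
      hH p q (Pi.single k (p k)) (Pi.single k (q k))
  have hsingle : ∀ j, ‖H (Pi.single j (p j)) (Pi.single j (q j)) - H 0 0‖ ≤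
      K * (dist (p j) 0 + dist (q j) 0) := fun j => by
    simpa only [Pi.zero_apply, sum_dist_single_zero] using
      hH (Pi.single j (p j)) (Pi.single j (q j)) 0 0
  calc ‖H p q - H 0 0 - ∑ i, (H (Pi.single i (p i)) (Pi.single i (q i)) - H 0 0)‖
      = ‖H p q - H (Pi.single k (p k)) (Pi.single k (q k)) -
          ∑ j ∈ Finset.univ.erase k, (H (Pi.single j (p j)) (Pi.single j (q j)) - H 0 0)‖ := by
        rw [← Finset.add_sum_erase _ _ (Finset.mem_univ k), ← sub_sub, sub_sub_sub_cancel_right]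
    _ ≤ K * ∑ j ∈ Finset.univ.erase k, (dist (p j) 0 + dist (q j) 0) +
          ∑ j ∈ Finset.univ.erase k, K * (dist (p j) 0 + dist (q j) 0) :=
        (norm_sub_le _ _).trans (add_le_add hk (norm_sum_le_of_le _ fun j _ => hsingle j))
    _ = 2 * K * ∑ j ∈ Finset.univ.erase k, (dist (p j) 0 + dist (q j) 0) := by
        rw [← Finset.mul_sum]; ring

end

theorem integrable_sub_zero_of_lipschitz {H : ℝ → (ι → E) → (ι → F) → V}
    (hcont : Continuous fun x : ℝ × (ι → E) × (ι → F) => H x.1 x.2.1 x.2.2)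
    (hLip : ∀ σ p q p' q', ‖H σ p q - H σ p' q'‖ ≤
      K * (∑ i, dist (p i) (p' i) + ∑ i, dist (q i) (q' i))) (hK : 0 ≤ K)
    {P : ℝ → ι → E} {Q : ℝ → ι → F} (hP : Continuous P) (hQ : Continuous Q) {b : ℝ → ℝ}
    (hb : Integrable b) (hPQ : ∀ σ, ∑ i, dist (P σ i) 0 + ∑ i, dist (Q σ i) 0 ≤ b σ) :
    Integrable fun σ => H σ (P σ) (Q σ) - H σ 0 0 := by
  have hmeas : AEStronglyMeasurable fun σ => H σ (P σ) (Q σ) - H σ 0 0 :=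
    ((hcont.comp (by fun_prop : Continuous fun σ => (σ, P σ, Q σ))).sub
      (hcont.comp (by fun_prop : Continuous fun σ : ℝ => (σ, (0 : ι → E), (0 : ι → F))))
      ).aestronglyMeasurable
  exact (hb.const_mul K).mono' hmeas <| .of_forall fun σ =>
    (hLip _ _ _ _ _).trans (mul_le_mul_of_nonneg_left (hPQ σ) hK)

variable [DecidableEq ι] [Nonempty ι]

-- At most one index `k` violates `L ≤ 2 * |u k|`; erasing it leaves only tails of `ρ`.
theorem norm_sub_sum_single_le_sum_indicator {H : (ι → E) → (ι → F) → V}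
    (hLip : ∀ p q p' q', ‖H p q - H p' q'‖ ≤
      K * (∑ i, dist (p i) (p' i) + ∑ i, dist (q i) (q' i))) (hK : 0 ≤ K)
    {p : ι → E} {q : ι → F} {u : ι → ℝ} {ρ : ℝ → ℝ}
    (hpq : ∀ i, dist (p i) 0 + dist (q i) 0 ≤ ρ (u i)) {L : ℝ}
    (hu : Pairwise fun i j => L ≤ |u i - u j|) :
    ‖H p q - H 0 0 - ∑ i, (H (Pi.single i (p i)) (Pi.single i (q i)) - H 0 0)‖ ≤
      2 * K * ∑ i, {s | L ≤ 2 * |s|}.indicator ρ (u i) := by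
  obtain ⟨k, hk⟩ := exists_forall_ne_le_two_mul_abs hu
  have hρ : ∀ i, 0 ≤ ρ (u i) := fun i => (by positivity : (0 : ℝ) ≤ _).trans (hpq i)
  refine (norm_sub_sum_single_le hLip p q k).trans (mul_le_mul_of_nonneg_left ?_ (by positivity))
  calc ∑ j ∈ Finset.univ.erase k, (dist (p j) 0 + dist (q j) 0)
      ≤ ∑ j ∈ Finset.univ.erase k, {s | L ≤ 2 * |s|}.indicator ρ (u j) :=
        Finset.sum_le_sum fun j hj => by
          have hmem : u j ∈ {s | L ≤ 2 * |s|} := hk j (Finset.ne_of_mem_erase hj)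
          exact (hpq j).trans_eq (indicator_of_mem hmem ρ).symm
    _ ≤ ∑ i, {s | L ≤ 2 * |s|}.indicator ρ (u i) :=
        Finset.sum_le_sum_of_subset_of_nonneg (Finset.erase_subset k _) fun i _ _ =>
          indicator_apply_nonneg fun _ => hρ i

theorem norm_integral_sub_sum_integral_single_le [NormedSpace ℝ V]
    {H : ℝ → (ι → E) → (ι → F) → V}
    (hcont : Continuous fun x : ℝ × (ι → E) × (ι → F) => H x.1 x.2.1 x.2.2)
    (hLip : ∀ σ p q p' q', ‖H σ p q - H σ p' q'‖ ≤
      K * (∑ i, dist (p i) (p' i) + ∑ i, dist (q i) (q' i))) (hK : 0 ≤ K)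
    {p : ι → ℝ → E} {q : ι → ℝ → F} (hp : ∀ i, Continuous (p i)) (hq : ∀ i, Continuous (q i))
    {ρ : ℝ → ℝ} (hρ : Integrable ρ) (hpq : ∀ i s, dist (p i s) 0 + dist (q i s) 0 ≤ ρ s)
    {L : ℝ} {τ : ι → ℝ} (hτ : Pairwise fun i j => L ≤ |τ i - τ j|) :
    ‖(∫ σ, (H σ (fun i => p i (τ i + σ)) (fun i => q i (τ i + σ)) - H σ 0 0)) -
        ∑ i, ∫ σ, (H σ (Pi.single i (p i (τ i + σ))) (Pi.single i (q i (τ i + σ))) - H σ 0 0)‖ ≤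
      2 * K * (Fintype.card ι * ∫ s in {s | L ≤ 2 * |s|}, ρ s) := by
  have hfull : Integrable fun σ =>
      H σ (fun i => p i (τ i + σ)) (fun i => q i (τ i + σ)) - H σ 0 0 :=
    integrable_sub_zero_of_lipschitz hcont hLip hK (by fun_prop) (by fun_prop)
      (integrable_finsetSum _ fun i _ => hρ.comp_add_left (τ i)) fun σ => by
        rw [← Finset.sum_add_distrib]
        exact Finset.sum_le_sum fun i _ => hpq i (τ i + σ)
  have hsingle : ∀ i, Integrable fun σ =>
      H σ (Pi.single i (p i (τ i + σ))) (Pi.single i (q i (τ i + σ))) - H σ 0 0 := fun i =>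
    integrable_sub_zero_of_lipschitz hcont hLip hK
      ((continuous_single i).comp (by fun_prop)) ((continuous_single i).comp (by fun_prop))
      (hρ.comp_add_left (τ i)) fun σ => by
        simpa only [sum_dist_single_zero] using hpq i (τ i + σ)
  have htail : Integrable ({s | L ≤ 2 * |s|}.indicator ρ) :=
    hρ.indicator (measurableSet_le measurable_const (by fun_prop))
  rw [← integral_finsetSum _ fun i _ => hsingle i,
    ← integral_sub hfull (integrable_finsetSum _ fun i _ => hsingle i)]
  calc _ ≤ ∫ σ, 2 * K * ∑ i, {s | L ≤ 2 * |s|}.indicator ρ (τ i + σ) :=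
        norm_integral_le_of_norm_le
          ((integrable_finsetSum _ fun i _ => htail.comp_add_left (τ i)).const_mul _) <|
          .of_forall fun σ => norm_sub_sum_single_le_sum_indicator (hLip σ) hK
            (fun i => hpq i (τ i + σ)) fun i j hij => by
              simpa only [add_sub_add_right_eq_sub] using hτ hij
    _ = 2 * K * (Fintype.card ι * ∫ s in {s | L ≤ 2 * |s|}, ρ s) := by
        rw [integral_const_mul, integral_finsetSum _ fun i _ => htail.comp_add_left (τ i)]
        simp_rw [integral_add_left_eq_self]
        rw [integral_indicator (measurableSet_le measurable_const (by fun_prop)),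
          Finset.sum_const, Finset.card_univ, nsmul_eq_mul]

end Splitting

section Melnikov

theorem integrable_exp_neg_mul_abs {c : ℝ} (hc : 0 < c) :
    Integrable fun x : ℝ => Real.exp (-c * |x|) := by
  rw [← integrableOn_univ, ← Set.Iic_union_Ioi (a := (0 : ℝ))]
  refine IntegrableOn.union ?_ ?_
  · refine (integrableOn_exp_mul_Iic hc 0).congr_fun (fun x hx => ?_) measurableSet_Iic
    simp only [abs_of_nonpos (Set.mem_Iic.1 hx), neg_mul_neg]
  · refine (exp_neg_integrableOn_Ioi 0 hc).congr_fun (fun x hx => ?_) measurableSet_Ioi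
    simp only [abs_of_pos (Set.mem_Ioi.1 hx)]

theorem exists_lt_of_not_const_on_closure_range {S X Y : Type*} [Nonempty S] [TopologicalSpace X]
    [LinearOrder Y] [TopologicalSpace Y] [T2Space Y] {F : X → Y} (hF : Continuous F) {γ : S → X}
    (hnc : ¬∃ c, ∀ x ∈ closure (Set.range γ), F x = c) : ∃ s t, F (γ s) < F (γ t) := by
  by_contra! hle
  let s₀ := Classical.arbitrary S
  have hconst : Set.EqOn F (fun _ => F (γ s₀)) (Set.range γ) := by
    rintro _ ⟨s, rfl⟩
    exact le_antisymm (hle s₀ s) (hle s s₀)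
  exact hnc ⟨F (γ s₀), hconst.closure hF continuous_const⟩

/-- The linear flow with frequency vector `(w, 1)` on the extended phase torus `𝕋ᵈ × 𝕋`, as a
one-parameter subgroup. -/
def torusFlow {κ : Type*} (w : κ → ℝ) : ℝ →+ (κ → AddCircle (1 : ℝ)) × AddCircle (1 : ℝ) where
  toFun s := (fun j => ((s * w j : ℝ) : AddCircle (1 : ℝ)), (s : AddCircle (1 : ℝ)))
  map_zero' := by ext <;> simp
  map_add' s s' := by ext <;> simp [add_mul]

variable {n d : ℕ} {p0 : Fin n → ℝ → ℝ} {q0 : Fin n → ℝ → AddCircle (1 : ℝ)}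
  {h : (Fin n → ℝ) → (Fin n → AddCircle (1 : ℝ)) → (Fin d → ℝ) →
    (Fin d → AddCircle (1 : ℝ)) → ℝ → ℝ}

theorem partialMelnikov_eq_partialMelnikov_zero (i : Fin n) (ω : (Fin d → ℝ) → Fin d → ℝ)
    (ς : ℝ) (I : Fin d → ℝ) (φ : Fin d → AddCircle (1 : ℝ)) (t : ℝ) :
    partialMelnikov i p0 q0 h ω ς I φ t =
      partialMelnikov i p0 q0 h ω 0 I
        (fun j => φ j - ((ς * ω I j : ℝ) : AddCircle (1 : ℝ))) (t - ς) := by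
  have hangle : ∀ σ j, φ j - ((ς * ω I j : ℝ) : AddCircle (1 : ℝ)) +
      (((σ + ς) * ω I j : ℝ) : AddCircle (1 : ℝ)) = φ j + ((σ * ω I j : ℝ) : AddCircle (1 : ℝ)) :=
    fun σ j => by rw [add_mul, AddCircle.coe_add]; abel
  have htime : ∀ σ, t - ς + (σ + ς) = t + σ := fun σ => by ring
  have hshift : ∀ σ, 0 + (σ + ς) = ς + σ := fun σ => by ring
  unfold partialMelnikov
  rw [← integral_add_right_eq_self (fun σ => h (Pi.single i (p0 i (0 + σ))) _ _ _ _ - _) ς]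
  simp only [hangle, htime, hshift]

theorem hasLargeAlmostPeriods_partialMelnikov {ω : (Fin d → ℝ) → Fin d → ℝ}
    {I : Fin d → ℝ} (φ : Fin d → AddCircle (1 : ℝ)) (t : ℝ)
    {F : Fin n → (Fin d → AddCircle (1 : ℝ)) × AddCircle (1 : ℝ) → ℝ}
    (hFcont : ∀ i, Continuous (F i))
    (hF : ∀ (i : Fin n) (θ : Fin d → AddCircle (1 : ℝ)) (u : ℝ),
      F i (θ, (u : AddCircle (1 : ℝ))) = partialMelnikov i p0 q0 h ω 0 I θ u) :
    HasLargeAlmostPeriods fun ς i => partialMelnikov i p0 q0 h ω ς I φ t := by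
  have : Fact ((0 : ℝ) < 1) := ⟨one_pos⟩
  have horbit : ∀ ς i, partialMelnikov i p0 q0 h ω ς I φ t =
      F i ((φ, (t : AddCircle (1 : ℝ))) + (-torusFlow (ω I)) ς) := fun ς i => by
    rw [partialMelnikov_eq_partialMelnikov_zero, ← hF, AddMonoidHom.neg_apply, ← sub_eq_add_neg]
    rfl
  simp only [horbit]
  exact hasLargeAlmostPeriods_comp_add (F := fun x i => F i x) (continuous_pi hFcont) _ _

theorem isAsymptoticSum_melnikovPotential [NeZero n] {K : ℝ} (hK : 0 ≤ K)
    (hp0 : ∀ i, Continuous (p0 i)) (hq0 : ∀ i, Continuous (q0 i)) {ρ : ℝ → ℝ} (hρ : Integrable ρ)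
    (hdecay : ∀ i s, |p0 i s| + dist (q0 i s) 0 ≤ ρ s)
    (hcont : Continuous fun x : (Fin n → ℝ) × (Fin n → AddCircle (1 : ℝ)) × (Fin d → ℝ) ×
        (Fin d → AddCircle (1 : ℝ)) × ℝ => h x.1 x.2.1 x.2.2.1 x.2.2.2.1 x.2.2.2.2)
    (hLip : ∀ p q p' q' I φ t, |h p q I φ t - h p' q' I φ t| ≤
      K * ((∑ i, |p i - p' i|) + ∑ i, dist (q i) (q' i)))
    (ω : (Fin d → ℝ) → Fin d → ℝ) (I : Fin d → ℝ) (φ : Fin d → AddCircle (1 : ℝ)) (t : ℝ) :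
    IsAsymptoticSum (fun τ => melnikovPotential p0 q0 h ω τ I φ t)
      fun i ς => partialMelnikov i p0 q0 h ω ς I φ t := fun ε hε => by
  let H : ℝ → (Fin n → ℝ) → (Fin n → AddCircle (1 : ℝ)) → ℝ := fun σ p q =>
    h p q I (fun j => φ j + ((σ * ω I j : ℝ) : AddCircle (1 : ℝ))) (t + σ)
  have : Continuous ((↑) : ℝ → AddCircle (1 : ℝ)) := AddCircle.continuous_mk' 1
  have hH : Continuous fun x : ℝ × (Fin n → ℝ) × (Fin n → AddCircle (1 : ℝ)) =>
      H x.1 x.2.1 x.2.2 :=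
    hcont.comp (by fun_prop : Continuous fun x : ℝ × (Fin n → ℝ) × (Fin n → AddCircle (1 : ℝ)) =>
      (x.2.1, x.2.2, I, (fun j => φ j + ((x.1 * ω I j : ℝ) : AddCircle (1 : ℝ))), t + x.1))
  have hlim := ((tendsto_setIntegral_le_two_mul_abs hρ).const_mul
    (Fintype.card (Fin n) : ℝ)).const_mul (2 * K)
  simp only [mul_zero] at hlim
  obtain ⟨L, hL⟩ := (hlim.eventually_le_const hε).exists
  refine ⟨L, fun τ hτ => ?_⟩
  simp only [melnikovPotential, partialMelnikov, Finset.sum_neg_distrib, neg_sub_neg]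
  rw [abs_sub_comm]
  exact (norm_integral_sub_sum_integral_single_le hH (fun σ p q p' q' => hLip p q p' q' _ _ _) hK
    hp0 hq0 hρ (fun i s => by simpa only [dist_zero_right, Real.norm_eq_abs] using hdecay i s)
    hτ).trans hL

theorem melnikovPotential_has_critical_points_general
    (hn : 1 ≤ n) {K : ℝ} (hK : 0 ≤ K)
    (hp0 : ∀ i, Continuous (p0 i)) (hq0 : ∀ i, Continuous (q0 i)) {ρ : ℝ → ℝ} (hρ : Integrable ρ)
    (hdecay : ∀ i s, |p0 i s| + dist (q0 i s) 0 ≤ ρ s)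
    (hcont : Continuous fun x : (Fin n → ℝ) × (Fin n → AddCircle (1 : ℝ)) × (Fin d → ℝ) ×
        (Fin d → AddCircle (1 : ℝ)) × ℝ => h x.1 x.2.1 x.2.2.1 x.2.2.2.1 x.2.2.2.2)
    (hLip : ∀ p q p' q' I φ t, |h p q I φ t - h p' q' I φ t| ≤
      K * ((∑ i, |p i - p' i|) + ∑ i, dist (q i) (q' i)))
    {ω : (Fin d → ℝ) → Fin d → ℝ} {I : Fin d → ℝ} {φ : Fin d → AddCircle (1 : ℝ)} {t : ℝ}
    (hM : Continuous fun τ : Fin n → ℝ => melnikovPotential p0 q0 h ω τ I φ t)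
    {F : Fin n → (Fin d → AddCircle (1 : ℝ)) × AddCircle (1 : ℝ) → ℝ}
    (hFcont : ∀ i, Continuous (F i))
    (hF : ∀ (i : Fin n) (θ : Fin d → AddCircle (1 : ℝ)) (u : ℝ),
      F i (θ, (u : AddCircle (1 : ℝ))) = partialMelnikov i p0 q0 h ω 0 I θ u)
    (hnc : ∀ i : Fin n, ¬∃ c : ℝ, ∀ x ∈ closure (Set.range fun ς : ℝ =>
        ((fun j => φ j - ((ς * ω I j : ℝ) : AddCircle (1 : ℝ))),
          ((t - ς : ℝ) : AddCircle (1 : ℝ)))), F i x = c) :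
    {τ : Fin n → ℝ |
      IsLocalMax (fun τ' : Fin n → ℝ => melnikovPotential p0 q0 h ω τ' I φ t) τ}.Infinite := by
  have : NeZero n := ⟨Nat.one_le_iff_ne_zero.1 hn⟩
  have hlt : ∀ i, ∃ x y,
      partialMelnikov i p0 q0 h ω x I φ t < partialMelnikov i p0 q0 h ω y I φ t := fun i => by
    simpa only [hF, ← partialMelnikov_eq_partialMelnikov_zero] using
      exists_lt_of_not_const_on_closure_range (hFcont i) (hnc i)
  refine Set.infinite_of_forall_exists_gt fun r => ?_
  obtain ⟨τ, hrτ, hτ⟩ :=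
    (isAsymptoticSum_melnikovPotential hK hp0 hq0 hρ hdecay hcont hLip ω I φ t).exists_lt_isLocalMax
      hM (hasLargeAlmostPeriods_partialMelnikov φ t hFcont hF) hlt r
  exact ⟨τ, hτ, hrτ⟩

end Melnikov

/-- Lemma 3.3, made precise: if for each `i` the descended partial
Melnikov potential is not constant on the closure of the orbit `{(φ − ςω(I), t − ς)}`,
then the Melnikov potential has a critical point with respect to `τ`; in fact there are
infinitely many such critical points. -/
theorem melnikovPotential_has_critical_points
    {n d : ℕ} (hn : 1 ≤ n) (hd : 1 ≤ d)
    (lam C0 K : ℝ) (hlam : 0 < lam) (hC0 : 0 < C0) (hK : 0 < K)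
    (p0 : Fin n → ℝ → ℝ) (q0 : Fin n → ℝ → AddCircle (1:ℝ))
    (hp0 : ∀ i, Continuous (p0 i)) (hq0 : ∀ i, Continuous (q0 i))
    (hdecay : ∀ i s, |p0 i s| + dist (q0 i s) 0 ≤ C0 * Real.exp (-lam * |s|))
    (h : (Fin n → ℝ) → (Fin n → AddCircle (1:ℝ)) → (Fin d → ℝ) →
      (Fin d → AddCircle (1:ℝ)) → ℝ → ℝ)
    (hcont : Continuous fun x : (Fin n → ℝ) × (Fin n → AddCircle (1:ℝ)) × (Fin d → ℝ) ×
        (Fin d → AddCircle (1:ℝ)) × ℝ => h x.1 x.2.1 x.2.2.1 x.2.2.2.1 x.2.2.2.2)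
    (hLip : ∀ p q p' q' I φ t, |h p q I φ t - h p' q' I φ t| ≤
      K * ((∑ i, |p i - p' i|) + ∑ i, dist (q i) (q' i)))
    (htper : ∀ p q I φ t, h p q I φ (t + 1) = h p q I φ t)
    (ω : (Fin d → ℝ) → Fin d → ℝ)
    (I : Fin d → ℝ) (φ : Fin d → AddCircle (1:ℝ)) (t : ℝ)
    (hdiff : Differentiable ℝ (fun τ : Fin n → ℝ => melnikovPotential p0 q0 h ω τ I φ t))
    (hdiffi : ∀ i : Fin n,
      Differentiable ℝ (fun ς => partialMelnikov i p0 q0 h ω ς I φ t))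
    -- `F i` is the (continuous) descent of `(θ, u) ↦ 𝓜̃ᵢ(0, I, θ, u)` to `𝕋ᵈ × 𝕋`:
    (F : Fin n → (Fin d → AddCircle (1:ℝ)) × AddCircle (1:ℝ) → ℝ)
    (hFcont : ∀ i, Continuous (F i))
    (hF : ∀ (i : Fin n) (θ : Fin d → AddCircle (1:ℝ)) (u : ℝ),
      F i (θ, (u : AddCircle (1:ℝ))) = partialMelnikov i p0 q0 h ω 0 I θ u)
    -- no `F i` is constant on the closure of the orbit `{(φ − ςω(I), t − ς) : ς ∈ ℝ}`:
    (hnc : ∀ i : Fin n, ¬ ∃ c : ℝ, ∀ x ∈ closure (Set.range fun ς : ℝ =>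
        ((fun j => φ j - ((ς * ω I j : ℝ) : AddCircle (1:ℝ))),
          ((t - ς : ℝ) : AddCircle (1:ℝ)))), F i x = c) :
    {τ : Fin n → ℝ |
        fderiv ℝ (fun τ' : Fin n → ℝ => melnikovPotential p0 q0 h ω τ' I φ t) τ = 0}.Nonempty ∧
    {τ : Fin n → ℝ |
        fderiv ℝ (fun τ' : Fin n → ℝ => melnikovPotential p0 q0 h ω τ' I φ t) τ = 0}.Infinite := by
  have hmax := melnikovPotential_has_critical_points_general hn hK.le hp0 hq0
    ((integrable_exp_neg_mul_abs hlam).const_mul C0) hdecay hcont hLip hdiff.continuous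
    hFcont hF hnc
  have hcrit := hmax.mono fun τ hτ => show fderiv ℝ _ τ = 0 from hτ.fderiv_eq_zero
  exact ⟨hcrit.nonempty, hcrit⟩
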